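/- Let m ≥ 4 and let e be an integer with 1 ≤ e < m/2 such that m/gcd(m,e) is even, and set ℓ = 2·gcd(m,e). Then the dual code C̄_E^⊥ has dimension 2m + 1 over F_2 and minimum nonzero Hamming weight 2^{m−1} − 2^{(m+ℓ−2)/2}, with weight distribution: the number of codewords of weight 0 is 1; of weight 2^{m−1} − 2^{(m+ℓ−2)/2} is 2^{m−ℓ}(2^m − 1)/(2^{ℓ/2} + 1); of weight 2^{m−1} − 2^{(m−2)/2} is 2^{(2m+ℓ)/2}(2^m − 1)/(2^{ℓ/2} + 1); of weight 2^{m−1} is 2((2^{ℓ/2} − 1)·2^{m−ℓ} + 1)(2^m − 1); of weight 2^{m−1} + 2^{(m−2)/2} is 2^{(2m+ℓ)/2}(2^m − 1)/(2^{ℓ/2} + 1); of weight 2^{m−1} + 2^{(m+ℓ−2)/2} is 2^{m−ℓ}(2^m − 1)/(2^{ℓ/2} + 1); of weight 2^m is 1; and there are no codewords of any other weight. Moreover, the extended code C̄_E has length 2^m, dimension 2^m − 1 − 2m, and minimum nonzero Hamming weight 4 if gcd(e,m) > 1 and 6 if gcd(e,m) = 1. -/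

import Mathlib

open Polynomial Finset

/-- The polynomial `c₀ + c₁x + ⋯ + c_{n−1}x^{n−1}` associated to a vector. -/
noncomputable def codePoly {n : ℕ} (c : Fin n → ZMod 2) : Polynomial (ZMod 2) :=
  ∑ i : Fin n, Polynomial.C (c i) * Polynomial.X ^ (i : ℕ)

/-- The generator polynomial `g_E(x) = M_α(x) · M_{α^{1+2^e}}(x)`. -/
noncomputable def gE (m e : ℕ) (α : GaloisField 2 m) : Polynomial (ZMod 2) :=
  minpoly (ZMod 2) α * minpoly (ZMod 2) (α ^ (1 + 2 ^ e))

/-- The binary cyclic code `C_E` of length `2^m − 1` with generator polynomial `g_E`. -/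
def CE (m e : ℕ) (α : GaloisField 2 m) : Set (Fin (2 ^ m - 1) → ZMod 2) :=
  {c | gE m e α ∣ codePoly c}

/-- The extended code `C̄_E ⊆ F_2^{2^m}`: the first `2^m − 1` coordinates form a codeword
of `C_E` and all `2^m` coordinates sum to zero. -/
def CEbar (m e : ℕ) (α : GaloisField 2 m) : Set (Fin (2 ^ m) → ZMod 2) :=
  {c | (fun i : Fin (2 ^ m - 1) => c (Fin.castLE (Nat.sub_le _ _) i)) ∈ CE m e α ∧
       ∑ i, c i = 0}

/-- The dual of a set of vectors over a commutative ring, as a submodule. -/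
def dualCode {n : ℕ} {F : Type*} [CommRing F] (C : Set (Fin n → F)) :
    Submodule F (Fin n → F) where
  carrier := {y | ∀ c ∈ C, ∑ i, y i * c i = 0}
  add_mem' := by
    intro a b ha hb c hc
    have h1 := ha c hc
    have h2 := hb c hc
    simp only [Pi.add_apply, add_mul, Finset.sum_add_distrib, h1, h2, add_zero]
  zero_mem' := by intro c hc; simp
  smul_mem' := by
    intro r a ha c hc
    have h1 := ha c hc
    simp only [Pi.smul_apply, smul_eq_mul, mul_assoc, ← Finset.mul_sum, h1, mul_zero]

lemma codePoly_add {n : ℕ} (a b : Fin n → ZMod 2) :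
    codePoly (fun i => a i + b i) = codePoly a + codePoly b := by
  simp [codePoly, Finset.sum_add_distrib, add_mul]

lemma codePoly_smul {n : ℕ} (r : ZMod 2) (a : Fin n → ZMod 2) :
    codePoly (fun i => r * a i) = Polynomial.C r * codePoly a := by
  simp [codePoly, Finset.mul_sum, mul_assoc]

/-- The extended code `C̄_E`, as an `F_2`-submodule of `F_2^{2^m}`. -/
noncomputable def CEbarSub (m e : ℕ) (α : GaloisField 2 m) :
    Submodule (ZMod 2) (Fin (2 ^ m) → ZMod 2) where
  carrier := CEbar m e α
  add_mem' := by
    rintro a b ⟨ha1, ha2⟩ ⟨hb1, hb2⟩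
    refine ⟨?_, ?_⟩
    · show gE m e α ∣
        codePoly (fun i : Fin (2 ^ m - 1) => (a + b) (Fin.castLE (Nat.sub_le _ _) i))
      have h : (fun i : Fin (2 ^ m - 1) => (a + b) (Fin.castLE (Nat.sub_le _ _) i)) =
          (fun i : Fin (2 ^ m - 1) =>
            a (Fin.castLE (Nat.sub_le _ _) i) + b (Fin.castLE (Nat.sub_le _ _) i)) := rfl
      rw [h, codePoly_add]
      exact dvd_add ha1 hb1
    · simp only [Pi.add_apply, Finset.sum_add_distrib, ha2, hb2, add_zero]
  zero_mem' := by
    refine ⟨?_, by simp⟩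
    show gE m e α ∣
      codePoly (fun i : Fin (2 ^ m - 1) => (0 : Fin (2 ^ m) → ZMod 2) (Fin.castLE (Nat.sub_le _ _) i))
    have h : (fun i : Fin (2 ^ m - 1) => (0 : Fin (2 ^ m) → ZMod 2) (Fin.castLE (Nat.sub_le _ _) i)) =
        (fun _ : Fin (2 ^ m - 1) => (0 : ZMod 2)) := rfl
    rw [h]
    simp [codePoly]
  smul_mem' := by
    rintro r a ⟨ha1, ha2⟩
    refine ⟨?_, ?_⟩
    · show gE m e α ∣
        codePoly (fun i : Fin (2 ^ m - 1) => (r • a) (Fin.castLE (Nat.sub_le _ _) i))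
      have h : (fun i : Fin (2 ^ m - 1) => (r • a) (Fin.castLE (Nat.sub_le _ _) i)) =
          (fun i : Fin (2 ^ m - 1) => r * a (Fin.castLE (Nat.sub_le _ _) i)) := rfl
      rw [h, codePoly_smul]
      exact Dvd.dvd.mul_left ha1 _
    · simp only [Pi.smul_apply, smul_eq_mul, ← Finset.mul_sum, ha2, mul_zero]

set_option linter.unusedSectionVars false
set_option linter.unusedDecidableInType false
set_option linter.unusedFintypeInType false

/-! ### Generic facts on exponential sums over finite fields of characteristic two -/

/-- The sign character of `ZMod 2`. -/
def sg (z : ZMod 2) : ℤ := if z = 0 then 1 else -1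

lemma sg_add (a b : ZMod 2) : sg (a + b) = sg a * sg b := by
  revert a b; decide

lemma sg_zero : sg 0 = 1 := by decide

lemma sg_sum {G : Type*} [AddCommGroup G] [Fintype G] (φ : G →+ ZMod 2) :
    ∑ g, sg (φ g) = if φ = 0 then (Fintype.card G : ℤ) else 0 := by
  split_ifs with h
  · subst h; simp [sg_zero]
  · have : ∃ g0, φ g0 ≠ 0 := by
      by_contra hh
      push Not at hh
      exact h (by ext g; simpa using hh g)
    obtain ⟨g0, hg0⟩ := this
    have h1 : φ g0 = 1 := by
      generalize φ g0 = z at hg0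
      revert z; decide
    have h2 : ∑ g, sg (φ g) = ∑ g, sg (φ (g + g0)) :=
      (Equiv.sum_comp (Equiv.addRight g0) (fun g => sg (φ g))).symm
    have h3 : ∀ g, sg (φ (g + g0)) = - sg (φ g) := by
      intro g
      rw [map_add, sg_add, h1]
      simp [sg]
    simp only [h3, Finset.sum_neg_distrib] at h2
    linarith

section FF

variable {F : Type*} [Field F] [Fintype F] [DecidableEq F] [Algebra (ZMod 2) F]

/-- The absolute trace. -/
noncomputable def tr (x : F) : ZMod 2 := Algebra.trace (ZMod 2) F x

lemma tr_add (x y : F) : tr (x + y) = tr x + tr y := map_add _ _ _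

lemma tr_zero : tr (0 : F) = 0 := map_zero _

lemma charTwo : CharP F 2 :=
  charP_of_injective_algebraMap (algebraMap (ZMod 2) F).injective 2

lemma tr_sq (x : F) : tr (x ^ 2) = tr x := by
  have := Algebra.trace_eq_of_algEquiv (FiniteField.frobeniusAlgEquivOfAlgebraic (ZMod 2) F) x
  simpa [tr] using this

lemma tr_pow (e : ℕ) (x : F) : tr (x ^ 2 ^ e) = tr x := by
  induction e with
  | zero => simp
  | succ k ih => rw [pow_succ, pow_mul, tr_sq, ih]

lemma tr_nondeg (a : F) (h : ∀ y, tr (a * y) = 0) : a = 0 := by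
  have := traceForm_nondegenerate (ZMod 2) F
  apply this.1
  intro y
  exact h y

lemma pow_surj (e : ℕ) : Function.Surjective (fun x : F => x ^ 2 ^ e) := by
  have : CharP F 2 := charTwo
  have : Function.Injective (fun x : F => x ^ 2 ^ e) := by
    intro x y hxy
    exact iterateFrobenius_inj F 2 e (by simpa [iterateFrobenius_def] using hxy)
  exact Finite.surjective_of_injective this

lemma add_self (x : F) : x + x = 0 := by
  have : CharP F 2 := charTwo
  exact CharTwo.add_self_eq_zero x

lemma add_pow_two_pow (x y : F) (e : ℕ) : (x + y) ^ 2 ^ e = x ^ 2 ^ e + y ^ 2 ^ e := by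
  have : CharP F 2 := charTwo
  exact add_pow_char_pow x y 2 e

lemma card_roots {m : ℕ} (hF : Fintype.card F = 2 ^ m) (k : ℕ) :
    (univ.filter fun z : F => z ≠ 0 ∧ z ^ (2 ^ k - 1) = 1).card = 2 ^ Nat.gcd m k - 1 := by
  have h := IsCyclic.card_powMonoidHom_ker Fˣ (2 ^ k - 1)
  rw [Nat.card_eq_fintype_card (α := Fˣ), Fintype.card_units, hF,
    Nat.pow_sub_one_gcd_pow_sub_one] at h
  rw [← h, Nat.card_eq_fintype_card, ← Fintype.card_coe]
  refine (Fintype.card_congr ?_).symm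
  refine ⟨fun u => ⟨(u.1 : F), ?_⟩, fun z => ⟨Units.mk0 z.1 ?_, ?_⟩, ?_, ?_⟩
  · have := u.2
    rw [MonoidHom.mem_ker, powMonoidHom_apply] at this
    simp only [Finset.mem_filter, Finset.mem_univ, true_and]
    exact ⟨u.1.ne_zero, by rw [← Units.val_pow_eq_pow_val, this]; rfl⟩
  · have := z.2
    simp only [Finset.mem_filter, Finset.mem_univ, true_and] at this
    exact this.1
  · have := z.2
    simp only [Finset.mem_filter, Finset.mem_univ, true_and] at this
    rw [MonoidHom.mem_ker, powMonoidHom_apply]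
    ext
    simpa using this.2
  · intro u; ext; simp
  · intro z; ext; simp

lemma fix_iff (k : ℕ) (z : F) (hz : z ≠ 0) : z ^ (2 ^ k) = z ↔ z ^ (2 ^ k - 1) = 1 := by
  have h : z ^ (2 ^ k) = z ^ (2 ^ k - 1) * z := by
    rw [← pow_succ, Nat.sub_add_cancel Nat.one_le_two_pow]
  rw [h]
  constructor
  · intro h'
    exact mul_right_cancel₀ hz (by rw [h', one_mul])
  · intro h'; rw [h', one_mul]

/-- The function `x ↦ Tr(a x^{1+2^e} + b x)`. -/
noncomputable def fQ (e : ℕ) (a b x : F) : ZMod 2 := tr (a * x ^ (1 + 2 ^ e) + b * x)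

/-- The Walsh transform. -/
noncomputable def SS (e : ℕ) (a b : F) : ℤ := ∑ x : F, sg (fQ e a b x)

/-- The radical of the quadratic form. -/
def Rad (e : ℕ) (a : F) : AddSubgroup F where
  carrier := {x | a ^ 2 ^ e * x ^ 2 ^ (2 * e) + a * x = 0}
  zero_mem' := by simp
  add_mem' := by
    intro x y hx hy
    simp only [Set.mem_ofPred_eq] at *
    rw [add_pow_two_pow]
    linear_combination hx + hy
  neg_mem' := by
    intro x hx
    have : CharP F 2 := charTwo
    simpa [CharTwo.neg_eq] using hx

lemma mem_Rad (e : ℕ) (a x : F) :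
    x ∈ Rad e a ↔ a ^ 2 ^ e * x ^ 2 ^ (2 * e) + a * x = 0 := Iff.rfl

/-- The polar form. -/
noncomputable def BB (e : ℕ) (a x y : F) : ZMod 2 :=
  tr (a * (x ^ 2 ^ e * y) + a * (x * y ^ 2 ^ e))

lemma fQ_add (e : ℕ) (a b x y : F) :
    fQ e a b (x + y) = fQ e a b x + fQ e a b y + BB e a x y := by
  simp only [fQ, BB, ← tr_add]
  congr 1
  rw [pow_add, pow_add, pow_add, add_pow_two_pow]
  ring

lemma BB_eq (e : ℕ) (a x y : F) :
    BB e a x y = tr ((a ^ 2 ^ e * x ^ 2 ^ (2 * e) + a * x) * y ^ 2 ^ e) := by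
  rw [BB, tr_add, ← tr_pow e (a * (x ^ 2 ^ e * y)), ← tr_add]
  congr 1
  rw [two_mul, pow_add, pow_mul]
  ring

lemma BB_rad (e : ℕ) (a x : F) : (∀ y, BB e a x y = 0) ↔ x ∈ Rad e a := by
  rw [mem_Rad]
  constructor
  · intro h
    apply tr_nondeg
    intro y
    obtain ⟨z, rfl⟩ := pow_surj (F := F) e y
    simp only
    rw [← BB_eq, h]
  · intro h y
    rw [BB_eq, h, zero_mul, tr_zero]

/-- The polar form as an additive map of its second variable. -/
noncomputable def BBhom (e : ℕ) (a x : F) : F →+ ZMod 2 where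
  toFun := BB e a x
  map_zero' := by simp [BB, tr_zero]
  map_add' y z := by
    simp only [BB, ← tr_add]
    congr 1
    rw [add_pow_two_pow]
    ring

/-- The function `fQ` restricted to the radical, an additive map. -/
noncomputable def fRad (e : ℕ) (a b : F) : Rad e a →+ ZMod 2 where
  toFun x := fQ e a b x
  map_zero' := by simp [fQ, tr_zero]
  map_add' x y := by
    have := (BB_rad e a x.1).2 x.2 y.1
    rw [AddSubgroup.coe_add, fQ_add, this, add_zero]

noncomputable instance (e : ℕ) (a : F) : Fintype (Rad e a) := Fintype.ofFinite _

open Classical in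
lemma SS_sq (e : ℕ) (a b : F) :
    SS e a b ^ 2 = Fintype.card F * ∑ y : Rad e a, sg (fRad e a b y) := by
  have h1 : SS e a b ^ 2 = ∑ y : F, ∑ x : F, sg (fQ e a b y) * sg (BB e a y x) := by
    rw [Finset.sum_comm, sq, SS, Finset.sum_mul_sum]
    refine Finset.sum_congr rfl fun x _ => ?_
    rw [← Equiv.sum_comp (Equiv.addRight x) (fun y => sg (fQ e a b x) * sg (fQ e a b y))]
    refine Finset.sum_congr rfl fun y _ => ?_
    rw [Equiv.coe_addRight, fQ_add, sg_add, sg_add]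
    have : sg (fQ e a b x) * sg (fQ e a b x) = 1 := by
      rw [← sg_add, CharTwo.add_self_eq_zero, sg_zero]
    linear_combination sg (fQ e a b y) * sg (BB e a y x) * this
  have h2 : ∀ y : F, ∑ x : F, sg (BB e a y x) = if y ∈ Rad e a then (Fintype.card F : ℤ) else 0 := by
    intro y
    have := sg_sum (BBhom e a y)
    rw [show (∑ x : F, sg (BB e a y x)) = ∑ g, sg (BBhom e a y g) from rfl, this]
    refine if_congr ?_ rfl rfl
    rw [← BB_rad, DFunLike.ext_iff]
    rfl
  rw [h1]
  simp_rw [← Finset.mul_sum, h2, mul_ite, mul_zero]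
  rw [← Finset.sum_filter, Finset.mul_sum]
  symm
  refine Finset.sum_bij (fun (y : Rad e a) _ => (y : F)) ?_ ?_ ?_ ?_
  · intro y _; simp
  · intro y _ z _ h; exact Subtype.ext h
  · intro y hy
    simp only [Finset.mem_filter] at hy
    exact ⟨⟨y, hy.2⟩, Finset.mem_univ _, rfl⟩
  · intro y _
    rw [mul_comm]; rfl

lemma SS_sq_mem (e : ℕ) (a b : F) :
    SS e a b ^ 2 = 0 ∨ SS e a b ^ 2 = Fintype.card F * Fintype.card (Rad e a) := by
  rw [SS_sq, sg_sum]
  split_ifs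
  · right; rfl
  · left; simp

/-- The additive map `b ↦ Tr(b y)`. -/
noncomputable def trHom (y : F) : F →+ ZMod 2 where
  toFun b := tr (b * y)
  map_zero' := by simp [tr_zero]
  map_add' b c := by rw [add_mul, tr_add]

lemma sum_tr (y : F) : ∑ b : F, sg (tr (b * y)) = if y = 0 then (Fintype.card F : ℤ) else 0 := by
  rw [show (∑ b : F, sg (tr (b * y))) = ∑ g, sg (trHom y g) from rfl, sg_sum]
  refine if_congr ?_ rfl rfl
  constructor
  · intro h
    apply tr_nondeg
    intro b
    rw [mul_comm]
    exact DFunLike.congr_fun h b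
  · rintro rfl
    ext b
    simp [trHom, tr_zero]

lemma parseval (e : ℕ) (a : F) : ∑ b : F, SS e a b ^ 2 = (Fintype.card F : ℤ) ^ 2 := by
  simp_rw [SS_sq]
  rw [← Finset.mul_sum, Finset.sum_comm]
  have : ∀ y : Rad e a, ∑ b : F, sg (fRad e a b y) =
      if y = 0 then (Fintype.card F : ℤ) else 0 := by
    intro y
    have h : ∀ b : F, sg (fRad e a b y) =
        sg (tr (a * (y : F) ^ (1 + 2 ^ e))) * sg (tr (b * (y : F))) := by
      intro b
      rw [← sg_add, ← tr_add]; rfl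
    simp_rw [h]
    rw [← Finset.mul_sum, sum_tr]
    by_cases hy : y = 0
    · subst hy; simp [tr_zero, sg_zero]
    · have : (y : F) ≠ 0 := fun h => hy (Subtype.ext h)
      simp [hy]
  simp_rw [this]
  rw [Finset.sum_ite_eq' Finset.univ (0 : Rad e a), if_pos (Finset.mem_univ _), sq]

lemma count_b (e : ℕ) (a : F) :
    (univ.filter fun b : F => SS e a b ^ 2 = Fintype.card F * Fintype.card (Rad e a)).card *
      Fintype.card (Rad e a) = Fintype.card F := by
  have hF : (Fintype.card F : ℤ) ≠ 0 := by exact_mod_cast Fintype.card_ne_zero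
  have h := parseval e a
  have h2 : ∀ b : F, SS e a b ^ 2 =
      if SS e a b ^ 2 = Fintype.card F * Fintype.card (Rad e a) then
        (Fintype.card F * Fintype.card (Rad e a) : ℤ) else 0 := by
    intro b
    split_ifs with hb
    · exact hb
    · exact (SS_sq_mem e a b).resolve_right hb
  rw [Finset.sum_congr rfl (fun b _ => h2 b), ← Finset.sum_filter, Finset.sum_const,
    nsmul_eq_mul] at h
  have : (((univ.filter fun b : F =>
      SS e a b ^ 2 = Fintype.card F * Fintype.card (Rad e a)).card : ℤ) *
      Fintype.card (Rad e a)) * Fintype.card F = Fintype.card F * Fintype.card F := by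
    rw [← sq, ← h]; ring
  exact_mod_cast mul_right_cancel₀ hF this

end FF

section Count

variable {F : Type*} [Field F] [Fintype F] [DecidableEq F] [Algebra (ZMod 2) F]

lemma card_fix {m : ℕ} (hF : Fintype.card F = 2 ^ m) (k : ℕ) :
    (univ.filter fun z : F => z ^ (2 ^ k) = z).card = 2 ^ Nat.gcd m k := by
  have h : (univ.filter fun z : F => z ^ (2 ^ k) = z) =
      insert 0 (univ.filter fun z : F => z ≠ 0 ∧ z ^ (2 ^ k - 1) = 1) := by
    ext z
    simp only [Finset.mem_filter, Finset.mem_univ, true_and, Finset.mem_insert]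
    by_cases hz : z = 0
    · subst hz; simp
    · simp [hz, fix_iff]
  rw [h, Finset.card_insert_of_notMem (by simp), card_roots hF,
    Nat.sub_add_cancel Nat.one_le_two_pow]

open Classical in
lemma card_Rad_eq (e : ℕ) (a : F) :
    Fintype.card (Rad e a) = (univ.filter fun x : F => x ∈ Rad e a).card := by
  rw [← Fintype.card_subtype]

lemma add_eq_zero_iff_eq' (x y : F) : x + y = 0 ↔ x = y := by
  have : CharP F 2 := charTwo
  exact CharTwo.add_eq_zero

open Classical in
lemma Rad_card {m : ℕ} (hF : Fintype.card F = 2 ^ m) (e : ℕ) (a : F) (ha : a ≠ 0) :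
    Fintype.card (Rad e a) = 1 ∨ Fintype.card (Rad e a) = 2 ^ Nat.gcd m (2 * e) := by
  by_cases h : ∃ x0 ∈ Rad e a, x0 ≠ 0
  · right
    obtain ⟨x0, hx0, hne⟩ := h
    rw [← card_fix hF, card_Rad_eq]
    symm
    rw [mem_Rad] at hx0
    refine Finset.card_bij (fun z _ => z * x0) ?_ ?_ ?_
    · intro z hz
      simp only [Finset.mem_filter, Finset.mem_univ, true_and] at hz ⊢
      rw [mem_Rad, mul_pow, hz]
      linear_combination z * hx0
    · intro z _ w _ hzw
      exact mul_right_cancel₀ hne hzw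
    · intro x hx
      simp only [Finset.mem_filter, Finset.mem_univ, true_and] at hx
      rw [mem_Rad] at hx
      refine ⟨x / x0, ?_, by field_simp⟩
      simp only [Finset.mem_filter, Finset.mem_univ, true_and]
      obtain ⟨z, rfl⟩ : ∃ z, x = z * x0 := ⟨x / x0, by field_simp⟩
      rw [mul_div_cancel_right₀ _ hne]
      rw [mul_pow] at hx
      have h1 : a * x0 * (z ^ 2 ^ (2 * e) - z) = 0 := by
        linear_combination z ^ 2 ^ (2 * e) * hx0 - hx
      have h2 := (mul_eq_zero.1 h1).resolve_left (mul_ne_zero ha hne)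
      exact sub_eq_zero.1 h2
  · left
    push Not at h
    rw [card_Rad_eq, Finset.card_eq_one]
    refine ⟨0, ?_⟩
    ext x
    simp only [Finset.mem_filter, Finset.mem_univ, true_and, Finset.mem_singleton]
    exact ⟨h x, fun hx => hx ▸ (Rad e a).zero_mem⟩

open Classical in
lemma double_count {m : ℕ} (hF : Fintype.card F = 2 ^ m) (e : ℕ) :
    ∑ a ∈ univ.filter (fun a : F => a ≠ 0), (Fintype.card (Rad e a) - 1) =
      (2 ^ m - 1) * (2 ^ Nat.gcd m e - 1) := by
  have h := Finset.sum_card_bipartiteAbove_eq_sum_card_bipartiteBelow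
    (s := univ.filter (fun a : F => a ≠ 0)) (t := univ.filter (fun a : F => a ≠ 0))
    (fun a x : F => x ∈ Rad e a)
  have h1 : ∀ a : F, ((univ.filter (fun a : F => a ≠ 0)).bipartiteAbove
      (fun a x : F => x ∈ Rad e a) a).card = Fintype.card (Rad e a) - 1 := by
    intro a
    rw [card_Rad_eq, ← Finset.card_erase_of_mem (a := (0 : F))]
    · congr 1
      ext x
      simp [Finset.bipartiteAbove]
    · simp [(Rad e a).zero_mem]
  have h2 : ∀ x ∈ (univ.filter (fun a : F => a ≠ 0)),
      ((univ.filter (fun a : F => a ≠ 0)).bipartiteBelow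
      (fun a x : F => x ∈ Rad e a) x).card = 2 ^ Nat.gcd m e - 1 := by
    intro x hx
    simp only [Finset.mem_filter, Finset.mem_univ, true_and] at hx
    rw [← card_roots hF]
    have key : ∀ a : F, a ≠ 0 → (x ∈ Rad e a ↔ (a * x ^ (2 ^ e + 1)) ^ (2 ^ e - 1) = 1) := by
      intro a ha
      rw [← fix_iff _ _ (mul_ne_zero ha (pow_ne_zero _ hx)), mem_Rad,
        ← add_eq_zero_iff_eq' (_ ^ 2 ^ e)]
      have : (a * x ^ (2 ^ e + 1)) ^ 2 ^ e + a * x ^ (2 ^ e + 1) =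
          (a ^ 2 ^ e * x ^ 2 ^ (2 * e) + a * x) * x ^ 2 ^ e := by
        rw [mul_pow, pow_succ, mul_pow, ← pow_mul x (2 ^ e) (2 ^ e), ← pow_add 2, ← two_mul]
        ring
      rw [this]
      simp [hx]
    refine Finset.card_bij (fun a _ => a * x ^ (2 ^ e + 1)) ?_ ?_ ?_
    · intro a ha
      simp only [Finset.mem_filter, Finset.mem_univ, true_and, Finset.bipartiteBelow] at ha ⊢
      exact ⟨mul_ne_zero ha.1 (pow_ne_zero _ hx), (key a ha.1).1 ha.2⟩
    · intro a _ b _ hab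
      exact mul_right_cancel₀ (pow_ne_zero _ hx) hab
    · intro z hz
      simp only [Finset.mem_filter, Finset.mem_univ, true_and] at hz
      have hc : z / x ^ (2 ^ e + 1) * x ^ (2 ^ e + 1) = z :=
        div_mul_cancel₀ _ (pow_ne_zero _ hx)
      have hd : z / x ^ (2 ^ e + 1) ≠ 0 := div_ne_zero hz.1 (pow_ne_zero _ hx)
      refine ⟨z / x ^ (2 ^ e + 1), ?_, hc⟩
      simp only [Finset.mem_filter, Finset.mem_univ, true_and, Finset.bipartiteBelow]
      exact ⟨hd, (key _ hd).2 (by rw [hc]; exact hz.2)⟩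
  rw [Finset.sum_congr rfl (fun a _ => h1 a), Finset.sum_congr rfl h2, Finset.sum_const] at h
  rw [h, smul_eq_mul, Finset.filter_ne', Finset.card_erase_of_mem (Finset.mem_univ _),
    Finset.card_univ, hF]

lemma SS_zero (e : ℕ) (b : F) : SS e 0 b = if b = 0 then (Fintype.card F : ℤ) else 0 := by
  rw [← sum_tr, SS]
  refine Finset.sum_congr rfl fun x _ => ?_
  rw [fQ, zero_mul, zero_add, mul_comm]

variable {m e d : ℕ}

/-- number of `a` with large radical -/
lemma N1_eq (hF : Fintype.card F = 2 ^ m) (hd : Nat.gcd m e = d) (hd1 : 1 ≤ d)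
    (h2d : Nat.gcd m (2 * e) = 2 * d) :
    (2 ^ d + 1) *
      (univ.filter fun a : F => a ≠ 0 ∧ Fintype.card (Rad e a) = 2 ^ (2 * d)).card = 2 ^ m - 1 := by
  have h := double_count hF e
  have h1 : ∀ a ∈ univ.filter (fun a : F => a ≠ 0), Fintype.card (Rad e a) - 1 =
      if Fintype.card (Rad e a) = 2 ^ (2 * d) then 2 ^ (2 * d) - 1 else 0 := by
    intro a ha
    simp only [Finset.mem_filter, Finset.mem_univ, true_and] at ha
    split_ifs with hr
    · rw [hr]
    · have := (Rad_card hF e a ha)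
      rw [h2d] at this
      rw [this.resolve_right hr]
  rw [Finset.sum_congr rfl h1, ← Finset.sum_filter, Finset.sum_const, Finset.filter_filter, hd,
    smul_eq_mul] at h
  set N := (univ.filter fun a : F => a ≠ 0 ∧ Fintype.card (Rad e a) = 2 ^ (2 * d)).card
  have h3 : 2 ^ (2 * d) - 1 = (2 ^ d + 1) * (2 ^ d - 1) := by
    rw [mul_comm 2 d, pow_mul, ← Nat.sq_sub_sq, one_pow]
  have h4 : 0 < 2 ^ d - 1 := by
    have : 2 ^ 1 ≤ 2 ^ d := Nat.pow_le_pow_right (by norm_num) hd1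
    omega
  rw [h3, ← mul_assoc] at h
  have := Nat.eq_of_mul_eq_mul_right h4 h
  rw [← this]; ring

lemma card_pairs (P : F → F → Prop) [∀ a b, Decidable (P a b)] :
    (univ.filter fun p : F × F => P p.1 p.2).card =
      ∑ a : F, (univ.filter fun b : F => P a b).card := by
  simp only [Finset.card_filter]
  exact Fintype.sum_prod_type _

lemma SS_sq_cases (hF : Fintype.card F = 2 ^ m) (h2d : Nat.gcd m (2 * e) = 2 * d) (a b : F) :
    SS e a b ^ 2 = 0 ∨ SS e a b ^ 2 = 2 ^ m ∨ SS e a b ^ 2 = 2 ^ (m + 2 * d) ∨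
      (a = 0 ∧ b = 0) := by
  by_cases ha : a = 0
  · subst ha
    by_cases hb : b = 0
    · simp [hb]
    · left; rw [SS_zero, if_neg hb]; norm_num
  · rcases SS_sq_mem e a b with h | h
    · exact Or.inl h
    · rw [hF] at h
      rcases Rad_card hF e a ha with h1 | h1
      · right; left; rw [h, h1]; push_cast; ring
      · right; right; left; rw [h, h1, h2d]; push_cast; ring

lemma SS_zero_zero (hF : Fintype.card F = 2 ^ m) : SS e (0 : F) 0 = 2 ^ m := by
  rw [SS_zero, if_pos rfl, hF]; push_cast; rfl

lemma two_pow_ne {a b : ℕ} (h : a ≠ b) : (2 : ℤ) ^ a ≠ 2 ^ b := by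
  intro h'
  exact h (Nat.pow_right_injective (le_refl 2) (by exact_mod_cast h'))

lemma A1_eq (hF : Fintype.card F = 2 ^ m) (hd : Nat.gcd m e = d) (hd1 : 1 ≤ d)
    (h2d : Nat.gcd m (2 * e) = 2 * d) (hdm : 2 * d < m) :
    (2 ^ d + 1) * (univ.filter fun p : F × F => SS e p.1 p.2 ^ 2 = 2 ^ (m + 2 * d)).card =
      2 ^ (m - 2 * d) * (2 ^ m - 1) := by
  rw [card_pairs (fun a b => SS e a b ^ 2 = 2 ^ (m + 2 * d)), ← N1_eq hF hd hd1 h2d]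
  have h : ∀ a : F, (univ.filter fun b : F => SS e a b ^ 2 = 2 ^ (m + 2 * d)).card =
      if a ≠ 0 ∧ Fintype.card (Rad e a) = 2 ^ (2 * d) then 2 ^ (m - 2 * d) else 0 := by
    intro a
    split_ifs with hc
    · have := count_b e a
      rw [hc.2, hF] at this
      have h3 : 2 ^ m = 2 ^ (m - 2 * d) * 2 ^ (2 * d) := by
        rw [← pow_add, Nat.sub_add_cancel hdm.le]
      conv_rhs at this => rw [h3]
      have := Nat.eq_of_mul_eq_mul_right (by positivity) this
      rw [← this]
      congr 1
      ext b
      simp only [Finset.mem_filter, Finset.mem_univ, true_and]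
      push_cast
      rw [pow_add]
    · rw [Finset.card_eq_zero, Finset.filter_eq_empty_iff]
      intro b _ hb
      by_cases ha : a = 0
      · subst ha
        rw [SS_zero] at hb
        split_ifs at hb
        · rw [hF] at hb
          push_cast at hb
          rw [← pow_mul] at hb
          exact two_pow_ne (by omega) hb
        · have : (2 : ℤ) ^ (m + 2 * d) ≠ 0 := by positivity
          exact this (by rw [← hb]; norm_num)
      · have hr : Fintype.card (Rad e a) = 1 := by
          have := Rad_card hF e a ha
          rw [h2d] at this
          exact this.resolve_right (fun h => hc ⟨ha, h⟩)
        have := SS_sq_mem e a b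
        rw [hr, hb, hF] at this
        push_cast at this
        rw [mul_one] at this
        rcases this with h | h
        · have : (2 : ℤ) ^ (m + 2 * d) ≠ 0 := by positivity
          exact this h
        · exact two_pow_ne (by omega) h
  rw [Finset.sum_congr rfl (fun a _ => h a), ← Finset.sum_filter, Finset.sum_const, smul_eq_mul]
  ring

lemma A2_eq (hF : Fintype.card F = 2 ^ m) (hd : Nat.gcd m e = d) (hd1 : 1 ≤ d)
    (h2d : Nat.gcd m (2 * e) = 2 * d) (hdm : 2 * d < m) :
    (2 ^ d + 1) * (univ.filter fun p : F × F => SS e p.1 p.2 ^ 2 = 2 ^ m).card =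
      2 ^ (m + d) * (2 ^ m - 1) := by
  rw [card_pairs (fun a b => SS e a b ^ 2 = 2 ^ m)]
  have h : ∀ a : F, (univ.filter fun b : F => SS e a b ^ 2 = 2 ^ m).card =
      if a ≠ 0 ∧ ¬ Fintype.card (Rad e a) = 2 ^ (2 * d) then 2 ^ m else 0 := by
    intro a
    split_ifs with hc
    · have hr : Fintype.card (Rad e a) = 1 := by
        have := Rad_card hF e a hc.1
        rw [h2d] at this
        exact this.resolve_right hc.2
      have := count_b e a
      rw [hr, hF, mul_one] at this
      conv_rhs => rw [← this]
      congr 1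
      ext b
      simp only [Finset.mem_filter, Finset.mem_univ, true_and]
      push_cast
      rw [mul_one]
    · rw [Finset.card_eq_zero, Finset.filter_eq_empty_iff]
      intro b _ hb
      by_cases ha : a = 0
      · subst ha
        rw [SS_zero] at hb
        split_ifs at hb
        · rw [hF] at hb
          push_cast at hb
          rw [← pow_mul] at hb
          exact two_pow_ne (by omega) hb
        · have : (2 : ℤ) ^ m ≠ 0 := by positivity
          exact this (by rw [← hb]; norm_num)
      · have hr : Fintype.card (Rad e a) = 2 ^ (2 * d) := by
          by_contra hh
          exact hc ⟨ha, hh⟩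
        have := SS_sq_mem e a b
        rw [hr, hb, hF] at this
        push_cast at this
        rw [← pow_add] at this
        rcases this with h | h
        · have : (2 : ℤ) ^ m ≠ 0 := by positivity
          exact this h
        · exact two_pow_ne (by omega) h
  rw [Finset.sum_congr rfl (fun a _ => h a), ← Finset.sum_filter, Finset.sum_const, smul_eq_mul]
  have h1 := N1_eq hF hd hd1 h2d
  have h2 := Finset.card_filter_add_card_filter_not (s := univ.filter (fun a : F => a ≠ 0))
    (fun a : F => Fintype.card (Rad e a) = 2 ^ (2 * d))
  rw [Finset.filter_filter, Finset.filter_filter, Finset.filter_ne' univ (0 : F),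
    Finset.card_erase_of_mem (Finset.mem_univ _), Finset.card_univ, hF] at h2
  set N := (univ.filter fun a : F => a ≠ 0 ∧ Fintype.card (Rad e a) = 2 ^ (2 * d)).card
  set N' := (univ.filter fun a : F => a ≠ 0 ∧ ¬ Fintype.card (Rad e a) = 2 ^ (2 * d)).card
  have h3 : (2 ^ d + 1) * N' = 2 ^ d * (2 ^ m - 1) := by
    generalize 2 ^ m - 1 = k at *
    zify at *
    linear_combination (2 ^ d + 1 : ℤ) * h2 - h1
  rw [← mul_assoc, h3, pow_add]
  ring

lemma A3_eq (hF : Fintype.card F = 2 ^ m) (hm : 1 ≤ m)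
    (h2d : Nat.gcd m (2 * e) = 2 * d) (hdm : 2 * d < m) (a b : F) :
    SS e a b ^ 2 = 2 ^ (2 * m) ↔ a = 0 ∧ b = 0 := by
  constructor
  · intro h
    rcases SS_sq_cases hF h2d a b with h1 | h1 | h1 | h1
    · rw [h1] at h
      have : (2 : ℤ) ^ (2 * m) ≠ 0 := by positivity
      exact absurd h.symm this
    · rw [h1] at h
      exact absurd h (two_pow_ne (by omega))
    · rw [h1] at h
      exact absurd h (two_pow_ne (by omega))
    · exact h1
  · rintro ⟨rfl, rfl⟩
    rw [SS_zero_zero hF, ← pow_mul, mul_comm]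

lemma A0_eq (hF : Fintype.card F = 2 ^ m) (hd : Nat.gcd m e = d) (hd1 : 1 ≤ d)
    (h2d : Nat.gcd m (2 * e) = 2 * d) (hdm : 2 * d < m) :
    (univ.filter fun p : F × F => SS e p.1 p.2 = 0).card =
      ((2 ^ d - 1) * 2 ^ (m - 2 * d) + 1) * (2 ^ m - 1) := by
  have h1 := A1_eq hF hd hd1 h2d hdm
  have h2 := A2_eq hF hd hd1 h2d hdm
  have hcard : (univ.filter fun p : F × F => SS e p.1 p.2 = 0).card +
      (univ.filter fun p : F × F => SS e p.1 p.2 ^ 2 = 2 ^ m).card +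
      (univ.filter fun p : F × F => SS e p.1 p.2 ^ 2 = 2 ^ (m + 2 * d)).card + 1 = 2 ^ m * 2 ^ m := by
    have hu : (univ : Finset (F × F)).card = 2 ^ m * 2 ^ m := by
      rw [Finset.card_univ, Fintype.card_prod, hF]
    have h3 : (univ.filter fun p : F × F => p = (0, 0)).card = 1 := by
      rw [Finset.filter_eq' univ ((0, 0) : F × F)]; simp
    rw [← hu, ← h3]
    simp only [Finset.card_filter]
    rw [← Finset.sum_add_distrib, ← Finset.sum_add_distrib, ← Finset.sum_add_distrib,
      Finset.card_eq_sum_ones]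
    refine Finset.sum_congr rfl fun p _ => ?_
    obtain ⟨a, b⟩ := p
    simp only [Prod.mk.injEq]
    have n1 : (2 : ℤ) ^ m ≠ 0 := by positivity
    have n2 : (2 : ℤ) ^ (m + 2 * d) ≠ 0 := by positivity
    have n3 : (2 : ℤ) ^ (2 * m) ≠ 0 := by positivity
    have n4 : (2 : ℤ) ^ m ≠ 2 ^ (m + 2 * d) := two_pow_ne (by omega)
    have n5 : (2 : ℤ) ^ (2 * m) ≠ 2 ^ (m + 2 * d) := two_pow_ne (by omega)
    have n6 : (2 : ℤ) ^ (2 * m) ≠ 2 ^ m := two_pow_ne (by omega)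
    simp only [← A3_eq (e := e) hF (by omega) h2d hdm]
    simp only [← sq_eq_zero_iff (a := SS e a b)]
    have := SS_sq_cases hF h2d a b
    rw [← A3_eq hF (by omega) h2d hdm] at this
    rcases this with h | h | h | h <;> rw [h] <;> simp [n1, n2, n3, n4, n5, n6, n1.symm, n2.symm, n3.symm, n4.symm, n5.symm, n6.symm]
  set A0 := (univ.filter fun p : F × F => SS e p.1 p.2 = 0).card
  set A1 := (univ.filter fun p : F × F => SS e p.1 p.2 ^ 2 = 2 ^ (m + 2 * d)).card
  set A2 := (univ.filter fun p : F × F => SS e p.1 p.2 ^ 2 = 2 ^ m).card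
  have hM : 2 ^ m = 2 ^ (m - 2 * d) * (2 ^ d * 2 ^ d) := by
    rw [← pow_add, ← pow_add]; congr 1; omega
  obtain ⟨k, hk⟩ : ∃ k, 2 ^ m = k + 1 := ⟨2 ^ m - 1, (Nat.sub_add_cancel Nat.one_le_two_pow).symm⟩
  obtain ⟨D, hD⟩ : ∃ D, 2 ^ d = D + 1 := ⟨2 ^ d - 1, (Nat.sub_add_cancel Nat.one_le_two_pow).symm⟩
  rw [pow_add] at h2
  rw [hk, hD] at h1 h2 hM ⊢
  rw [hk] at hcard
  rw [Nat.add_sub_cancel] at h1 h2 ⊢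
  rw [Nat.add_sub_cancel]
  clear hk hD hF
  generalize 2 ^ (m - 2 * d) = M at *
  have : (D + 1 + 1) * A0 = (D + 1 + 1) * ((D * M + 1) * k) := by
    zify at *
    linear_combination (D + 2 : ℤ) * hcard - h1 - h2 + k * hM
  exact Nat.eq_of_mul_eq_mul_left (by omega) this

end Count

section Code

variable {F : Type*} [Field F] [Fintype F] [DecidableEq F] [Algebra (ZMod 2) F]
variable {N : ℕ}

/-- The parametrization of the dual code. -/
noncomputable def TT (e : ℕ) (P : Fin N ≃ F) : (F × F × ZMod 2) →ₗ[ZMod 2] (Fin N → ZMod 2) where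
  toFun t := fun i => fQ e t.1 t.2.1 (P i) + t.2.2
  map_add' s t := by
    funext i
    simp only [Prod.fst_add, Prod.snd_add, Pi.add_apply]
    have : fQ e (s.1 + t.1) (s.2.1 + t.2.1) (P i) =
        fQ e s.1 s.2.1 (P i) + fQ e t.1 t.2.1 (P i) := by
      simp only [fQ, ← tr_add]
      congr 1
      ring
    rw [this]; ring
  map_smul' r t := by
    funext i
    simp only [Prod.smul_fst, Prod.smul_snd, Pi.smul_apply, RingHom.id_apply, smul_add]
    congr 1
    simp only [fQ, tr, smul_mul_assoc, ← smul_add, map_smul]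

lemma TT_apply (e : ℕ) (P : Fin N ≃ F) (a b : F) (c : ZMod 2) (i : Fin N) :
    TT e P (a, b, c) i = fQ e a b (P i) + c := rfl

/-- The dot product. -/
noncomputable def dotB (N : ℕ) : LinearMap.BilinForm (ZMod 2) (Fin N → ZMod 2) :=
  dotProductBilin (ZMod 2) (ZMod 2)

lemma dotB_apply (x y : Fin N → ZMod 2) : dotB N x y = ∑ i, x i * y i := rfl

lemma dotB_symm (x y : Fin N → ZMod 2) : dotB N x y = dotB N y x := by
  simp only [dotB_apply, mul_comm]

lemma dotB_refl : (dotB N).IsRefl := by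
  intro x y h
  rw [dotB_symm]; exact h

lemma dotB_nondeg : (dotB N).Nondegenerate := by
  have h : ∀ x : Fin N → ZMod 2, (∀ y, dotB N x y = 0) → x = 0 := by
    intro x hx
    funext i
    have := hx (Pi.single i 1)
    simpa [dotB_apply, Pi.single_apply] using this
  refine ⟨h, fun x hx => h x fun y => ?_⟩
  rw [dotB_symm]; exact hx y

/-- The three parity checks. -/
def Chk (e : ℕ) (P : Fin N ≃ F) (c : Fin N → ZMod 2) : Prop :=
  ∑ i, c i • P i = 0 ∧ ∑ i, c i • (P i) ^ (1 + 2 ^ e) = 0 ∧ ∑ i, c i = 0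

lemma TT_dot (e : ℕ) (P : Fin N ≃ F) (a b : F) (t : ZMod 2) (c : Fin N → ZMod 2) :
    dotB N (TT e P (a, b, t)) c =
      tr (a * ∑ i, c i • (P i) ^ (1 + 2 ^ e)) + tr (b * ∑ i, c i • P i) + t * ∑ i, c i := by
  simp only [dotB_apply, TT_apply, fQ, tr, map_add, Finset.mul_sum, map_sum, mul_smul_comm,
    map_smul, smul_eq_mul, ← Finset.sum_add_distrib]
  refine Finset.sum_congr rfl fun i _ => ?_
  ring

lemma chk_iff (e : ℕ) (P : Fin N ≃ F) (c : Fin N → ZMod 2) :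
    Chk e P c ↔ c ∈ (dotB N).orthogonal (LinearMap.range (TT e P)) := by
  rw [LinearMap.BilinForm.mem_orthogonal_iff]
  constructor
  · rintro ⟨h1, h2, h3⟩ _ ⟨⟨a, b, t⟩, rfl⟩
    change dotB N (TT e P (a, b, t)) c = 0
    rw [TT_dot, h1, h2, h3]
    simp [tr_zero]
  · intro h
    have h' : ∀ a b t, dotB N (TT e P (a, b, t)) c = 0 := fun a b t => h _ ⟨_, rfl⟩
    simp only [TT_dot] at h'
    refine ⟨?_, ?_, ?_⟩
    · apply tr_nondeg
      intro y
      have := h' 0 y 0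
      simpa [tr_zero, mul_comm] using this
    · apply tr_nondeg
      intro y
      have := h' y 0 0
      simpa [tr_zero, mul_comm] using this
    · have := h' 0 0 1
      simpa [tr_zero] using this

lemma sum_sg (y : Fin N → ZMod 2) : ∑ i, sg (y i) = N - 2 * (hammingNorm y : ℤ) := by
  have h : ∀ z : ZMod 2, sg z = 1 - 2 * (if z ≠ 0 then 1 else 0) := by decide
  simp only [h, Finset.sum_sub_distrib, ← Finset.mul_sum, hammingNorm, Finset.card_filter]
  simp

lemma TT_weight (e : ℕ) (P : Fin N ≃ F) (a b : F) (c : ZMod 2) :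
    sg c * SS e a b = N - 2 * (hammingNorm (TT e P (a, b, c)) : ℤ) := by
  rw [← sum_sg]
  simp only [TT_apply, sg_add]
  rw [← Finset.sum_mul, Equiv.sum_comp P (fun x => sg (fQ e a b x)), SS, mul_comm]

lemma sg_sq (c : ZMod 2) : sg c ^ 2 = 1 := by revert c; decide

lemma sg_inj {c c' : ZMod 2} (h : sg c = sg c') : c = c' := by
  revert c c'; decide

variable {m e d : ℕ}

lemma card_SS_ne (s : ℤ) (hs : s ≠ 0) :
    (univ.filter fun t : F × F × ZMod 2 => sg t.2.2 * SS e t.1 t.2.1 = s).card =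
      (univ.filter fun p : F × F => SS e p.1 p.2 ^ 2 = s ^ 2).card := by
  refine Finset.card_bij (fun t _ => (t.1, t.2.1)) ?_ ?_ ?_
  · rintro ⟨a, b, c⟩ h
    simp only [Finset.mem_filter, Finset.mem_univ, true_and] at h ⊢
    rw [← h, mul_pow, sg_sq, one_mul]
  · rintro ⟨a, b, c⟩ h ⟨a', b', c'⟩ h' heq
    simp only [Finset.mem_filter, Finset.mem_univ, true_and, Prod.mk.injEq] at h h' heq
    obtain ⟨rfl, rfl⟩ := heq
    have h0 : SS e a b ≠ 0 := by
      intro h0; rw [h0, mul_zero] at h; exact hs h.symm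
    have := mul_right_cancel₀ h0 (h.trans h'.symm)
    rw [sg_inj this]
  · rintro ⟨a, b⟩ h
    simp only [Finset.mem_filter, Finset.mem_univ, true_and] at h
    rcases sq_eq_sq_iff_eq_or_eq_neg.1 h with h | h
    · refine ⟨(a, b, 0), ?_, rfl⟩
      simp [sg_zero, h]
    · refine ⟨(a, b, 1), ?_, rfl⟩
      simp [sg, h]

lemma card_SS_zero :
    (univ.filter fun t : F × F × ZMod 2 => sg t.2.2 * SS e t.1 t.2.1 = 0).card =
      2 * (univ.filter fun p : F × F => SS e p.1 p.2 = 0).card := by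
  have h2 : (univ : Finset (ZMod 2)).card = 2 := by decide
  have h3 := Finset.card_product (univ.filter fun p : F × F => SS e p.1 p.2 = 0)
    (univ : Finset (ZMod 2))
  rw [h2, mul_comm] at h3
  rw [← h3]
  refine Finset.card_bij (fun t _ => ((t.1, t.2.1), t.2.2)) ?_ ?_ ?_
  · rintro ⟨a, b, c⟩ h
    simp only [Finset.mem_filter, Finset.mem_univ, true_and, Finset.mem_product] at h ⊢
    have : ∀ c : ZMod 2, sg c ≠ 0 := by decide
    simpa [this] using h
  · rintro ⟨a, b, c⟩ h ⟨a', b', c'⟩ h' heq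
    simp only [Prod.mk.injEq] at heq ⊢
    tauto
  · rintro ⟨⟨a, b⟩, c⟩ h
    simp only [Finset.mem_filter, Finset.mem_univ, true_and, Finset.mem_product] at h
    refine ⟨(a, b, c), ?_, rfl⟩
    simp [h.1]

lemma TT_inj (P : Fin N ≃ F) (hN : N = 2 ^ m) (hF : Fintype.card F = 2 ^ m) (hm : 1 ≤ m)
    (h2d : Nat.gcd m (2 * e) = 2 * d) (hdm : 2 * d < m) :
    Function.Injective (TT e P) := by
  rw [injective_iff_map_eq_zero]
  rintro ⟨a, b, c⟩ h
  have hw := TT_weight e P a b c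
  rw [h, hammingNorm_zero, hN] at hw
  push_cast at hw
  rw [sub_zero] at hw
  have h2 : SS e a b ^ 2 = 2 ^ (2 * m) := by
    have := congrArg (· ^ 2) hw
    simp only [mul_pow, sg_sq, one_mul] at this
    rw [this, ← pow_mul, mul_comm]
  obtain ⟨rfl, rfl⟩ := (A3_eq hF hm h2d hdm a b).1 h2
  rw [SS_zero_zero hF] at hw
  have h3 : (2 : ℤ) ^ m ≠ 0 := by positivity
  have h4 : sg c = sg 0 := by
    rw [sg_zero]; exact mul_right_cancel₀ h3 (by rw [hw, one_mul])
  rw [sg_inj h4]; rfl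

lemma count_w (P : Fin N ≃ F) (hinj : Function.Injective (TT e P)) (w : ℕ) (s : ℤ)
    (hs : (N : ℤ) - 2 * w = s) :
    {y : Fin N → ZMod 2 | y ∈ LinearMap.range (TT e P) ∧ hammingNorm y = w}.ncard =
      (univ.filter fun t : F × F × ZMod 2 => sg t.2.2 * SS e t.1 t.2.1 = s).card := by
  rw [← Set.ncard_coe_finset, ← Set.ncard_image_of_injective _ hinj]
  congr 1
  ext y
  simp only [Set.mem_ofPred_eq, LinearMap.mem_range, Set.mem_image, Finset.coe_filter,
    Finset.mem_univ, true_and]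
  constructor
  · rintro ⟨⟨⟨a, b, c⟩, rfl⟩, hw⟩
    refine ⟨(a, b, c), ?_, rfl⟩
    rw [TT_weight e P, hw, hs]
  · rintro ⟨⟨a, b, c⟩, ht, rfl⟩
    refine ⟨⟨_, rfl⟩, ?_⟩
    rw [TT_weight e P] at ht
    simp only at ht
    omega

/-! ### Minimum distance -/

/-- A finite set of field elements which is the support of a codeword. -/
def GoodSet (e : ℕ) (S : Finset F) : Prop :=
  S.Nonempty ∧ Even S.card ∧ ∑ x ∈ S, x = 0 ∧ ∑ x ∈ S, x ^ (1 + 2 ^ e) = 0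

lemma good_of_chk (P : Fin N ≃ F) (c : Fin N → ZMod 2) (h : Chk e P c) (h0 : c ≠ 0) :
    ∃ S : Finset F, GoodSet e S ∧ S.card = hammingNorm c := by
  have hc : ∀ i (x : F), c i • x = if c i ≠ 0 then x else 0 := by
    intro i x
    have : ∀ z : ZMod 2, z = 0 ∨ z = 1 := by decide
    rcases this (c i) with h | h <;> simp [h]
  refine ⟨(univ.filter fun i => c i ≠ 0).map P.toEmbedding, ⟨?_, ?_, ?_, ?_⟩, ?_⟩
  · rw [Finset.map_nonempty]
    by_contra hh
    rw [Finset.not_nonempty_iff_eq_empty, Finset.filter_eq_empty_iff] at hh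
    exact h0 (funext fun i => by simpa using hh (Finset.mem_univ i))
  · rw [Finset.card_map, ← ZMod.natCast_eq_zero_iff_even]
    refine Eq.trans ?_ h.2.2
    have : ∀ z : ZMod 2, z = if z ≠ 0 then 1 else 0 := by decide
    rw [Finset.card_filter]
    push_cast
    exact Finset.sum_congr rfl fun i _ => (this (c i)).symm
  · rw [Finset.sum_map, Finset.sum_filter]
    refine Eq.trans ?_ h.1
    exact Finset.sum_congr rfl fun i _ => (hc i _).symm
  · rw [Finset.sum_map, Finset.sum_filter]
    refine Eq.trans ?_ h.2.1
    exact Finset.sum_congr rfl fun i _ => (hc i _).symm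
  · rw [Finset.card_map]; rfl

lemma chk_of_good (P : Fin N ≃ F) (S : Finset F) (h : GoodSet e S) :
    ∃ c : Fin N → ZMod 2, Chk e P c ∧ c ≠ 0 ∧ hammingNorm c = S.card := by
  obtain ⟨h0, h1, h2, h3⟩ := h
  have hs : ∀ f : F → F, ∑ i, (if P i ∈ S then (1 : ZMod 2) else 0) • f (P i) = ∑ x ∈ S, f x := by
    intro f
    rw [Equiv.sum_comp P (fun x => (if x ∈ S then (1 : ZMod 2) else 0) • f x)]
    simp [ite_smul]
  have hcard : (univ.filter fun i => P i ∈ S).card = S.card := by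
    rw [← Finset.card_map P.toEmbedding]
    congr 1
    ext x
    simp only [Finset.mem_map, Finset.mem_filter, Finset.mem_univ, true_and]
    constructor
    · rintro ⟨i, hi, rfl⟩; exact hi
    · intro hx; exact ⟨P.symm x, by simpa using hx, by simp⟩
  have hn : hammingNorm (fun i => if P i ∈ S then (1 : ZMod 2) else 0) = S.card := by
    rw [hammingNorm, ← hcard]
    congr 1
    ext i
    simp
  refine ⟨fun i => if P i ∈ S then 1 else 0, ⟨?_, ?_, ?_⟩, ?_, hn⟩
  · rw [hs (fun x => x), h2]
  · rw [hs (fun x => x ^ (1 + 2 ^ e)), h3]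
  · rw [← Finset.sum_filter, Finset.sum_const, hcard, nsmul_eq_mul, mul_one,
      ZMod.natCast_eq_zero_iff_even]
    exact h1
  · intro hz
    rw [hz, hammingNorm_zero] at hn
    exact absurd hn.symm (Finset.card_pos.2 h0).ne'

lemma good_ge_four (S : Finset F) (h : GoodSet e S) : 4 ≤ S.card := by
  obtain ⟨h0, h1, h2, h3⟩ := h
  have hp := Finset.card_pos.2 h0
  by_contra hlt
  have : S.card = 2 := by
    obtain ⟨k, hk⟩ := h1
    omega
  obtain ⟨x, y, hxy, rfl⟩ := Finset.card_eq_two.1 this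
  rw [Finset.sum_pair hxy, add_eq_zero_iff_eq'] at h2
  exact hxy h2

lemma fix_one (hF : Fintype.card F = 2 ^ m) (hd : Nat.gcd m e = 1) (z : F)
    (hz : z ^ 2 ^ e = z) : z = 0 ∨ z = 1 := by
  by_contra hh
  push Not at hh
  have h := card_fix hF e
  rw [hd] at h
  have h2 : ({0, 1, z} : Finset F) ⊆ univ.filter fun z : F => z ^ (2 ^ e) = z := by
    intro x hx
    simp only [Finset.mem_insert, Finset.mem_singleton] at hx
    simp only [Finset.mem_filter, Finset.mem_univ, true_and]
    rcases hx with rfl | rfl | rfl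
    · simp
    · simp
    · exact hz
  have h3 := Finset.card_le_card h2
  rw [h, Finset.card_eq_three.2 ⟨0, 1, z, zero_ne_one, hh.1.symm, hh.2.symm, rfl⟩] at h3
  omega

lemma good_ge_six (hF : Fintype.card F = 2 ^ m) (hd : Nat.gcd m e = 1)
    (S : Finset F) (h : GoodSet e S) : 6 ≤ S.card := by
  have h4 := good_ge_four S h
  obtain ⟨h0, h1, h2, h3⟩ := h
  by_contra hlt
  have hS : S.card = 3 + 1 := by
    obtain ⟨k, hk⟩ := h1
    omega
  obtain ⟨x, T, hxT, rfl, hT⟩ := Finset.card_eq_succ.1 hS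
  obtain ⟨y, z, w, hyz, hyw, hzw, rfl⟩ := Finset.card_eq_three.1 hT
  have hsum : ∀ f : F → F, ∑ t ∈ insert x {y, z, w}, f t = f x + (f y + (f z + f w)) := by
    intro f
    rw [Finset.sum_insert hxT, Finset.sum_insert (by simp [hyz, hyw]), Finset.sum_pair hzw]
  rw [hsum (fun x => x)] at h2
  rw [hsum (fun x => x ^ (1 + 2 ^ e))] at h3
  rw [add_eq_zero_iff_eq'] at h2
  have h22 : (2 : F) = 0 := by
    rw [← one_add_one_eq_two]; exact add_self 1
  have hv : z + w ≠ 0 := fun h => hzw ((add_eq_zero_iff_eq' z w).1 h)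
  have hu : y + w ≠ 0 := fun h => hyw ((add_eq_zero_iff_eq' y w).1 h)
  have huv : (y + w) ^ 2 ^ e * (z + w) = (y + w) * (z + w) ^ 2 ^ e := by
    rw [← add_eq_zero_iff_eq', ← h3, h2]
    simp only [pow_add, add_pow_two_pow, pow_one]
    linear_combination (- y * y ^ 2 ^ e - z * z ^ 2 ^ e) * h22
  have hfix : ((y + w) / (z + w)) ^ 2 ^ e = (y + w) / (z + w) := by
    rw [div_pow, div_eq_div_iff (pow_ne_zero _ hv) hv, huv]
  rcases fix_one hF hd _ hfix with h | h
  · exact (div_ne_zero hu hv) h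
  · rw [div_eq_one_iff_eq hv] at h
    exact hyz (add_right_cancel h)

lemma exists_four (hF : Fintype.card F = 2 ^ m) (hd : 1 < Nat.gcd m e) :
    ∃ S : Finset F, GoodSet e S ∧ S.card = 4 := by
  have h := card_fix hF e
  have h4 : 2 < (univ.filter fun z : F => z ^ (2 ^ e) = z).card := by
    rw [h]
    calc 2 < 2 ^ 2 := by norm_num
      _ ≤ _ := Nat.pow_le_pow_right (by norm_num) hd
  have : ∃ u ∈ univ.filter fun z : F => z ^ (2 ^ e) = z, u ∉ ({0, 1} : Finset F) := by
    by_contra hh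
    push Not at hh
    have := Finset.card_le_card (s := univ.filter fun z : F => z ^ (2 ^ e) = z)
      (t := {0, 1}) hh
    have h5 : ({0, 1} : Finset F).card ≤ 2 := Finset.card_le_two
    omega
  obtain ⟨u, hu, hu2⟩ := this
  simp only [Finset.mem_filter, Finset.mem_univ, true_and] at hu
  simp only [Finset.mem_insert, Finset.mem_singleton, not_or] at hu2
  have h22 : (2 : F) = 0 := by
    rw [← one_add_one_eq_two]; exact add_self 1
  have n1 : (0 : F) ∉ ({1, u, u + 1} : Finset F) := by
    simp only [Finset.mem_insert, Finset.mem_singleton, not_or]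
    exact ⟨zero_ne_one, fun h => hu2.1 h.symm, fun h => hu2.2 ((add_eq_zero_iff_eq' u 1).1 h.symm)⟩
  have n2 : (1 : F) ∉ ({u, u + 1} : Finset F) := by
    simp only [Finset.mem_insert, Finset.mem_singleton, not_or]
    exact ⟨fun h => hu2.2 h.symm, fun h => hu2.1 (by simpa using h)⟩
  have n3 : u ∉ ({u + 1} : Finset F) := by simp
  have hsum : ∀ f : F → F, ∑ t ∈ ({0, 1, u, u + 1} : Finset F), f t =
      f 0 + (f 1 + (f u + f (u + 1))) := by
    intro f
    rw [Finset.sum_insert n1, Finset.sum_insert n2, Finset.sum_insert n3, Finset.sum_singleton]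
  have hcard : ({0, 1, u, u + 1} : Finset F).card = 4 := by
    rw [Finset.card_insert_of_notMem n1, Finset.card_insert_of_notMem n2,
      Finset.card_insert_of_notMem n3, Finset.card_singleton]
  refine ⟨{0, 1, u, u + 1}, ⟨⟨0, by simp⟩, by rw [hcard]; decide, ?_, ?_⟩, hcard⟩
  · rw [hsum (fun x => x)]
    linear_combination (u + 1) * h22
  · rw [hsum (fun x => x ^ (1 + 2 ^ e))]
    simp only [pow_add, add_pow_two_pow, hu, pow_one, one_pow, mul_one, zero_mul, zero_add]
    linear_combination (u ^ 2 + u + 1) * h22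

lemma choose_gt (n : ℕ) (hn : 16 ≤ n) : n * n < n.choose 3 := by
  have h := Nat.descFactorial_eq_factorial_mul_choose n 3
  obtain ⟨k, rfl⟩ : ∃ k, n = k + 2 := ⟨n - 2, by omega⟩
  simp only [Nat.descFactorial, Nat.factorial] at h
  have e1 : k + 2 - 2 = k := by omega
  have e2 : k + 2 - 1 = k + 1 := by omega
  have e3 : k + 2 - 0 = k + 2 := by omega
  rw [e1, e2, e3] at h
  nlinarith

lemma sum_symmDiff_two (S T : Finset F) (f : F → F) :
    ∑ x ∈ symmDiff S T, f x = ∑ x ∈ S, f x + ∑ x ∈ T, f x := by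
  have h1 := Finset.sum_sdiff (f := f) (Finset.inter_subset_left (s₁ := S) (s₂ := T))
  have h2 := Finset.sum_sdiff (f := f) (Finset.inter_subset_right (s₁ := S) (s₂ := T))
  rw [Finset.sdiff_inter_self_left] at h1
  rw [Finset.sdiff_inter_self_right] at h2
  have h3 : ∑ x ∈ symmDiff S T, f x = ∑ x ∈ S \ T, f x + ∑ x ∈ T \ S, f x := by
    rw [symmDiff_def, Finset.sup_eq_union, Finset.sum_union]
    exact disjoint_sdiff_sdiff
  rw [h3, ← h1, ← h2]
  have := add_self (∑ x ∈ S ∩ T, f x)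
  linear_combination - this

lemma exists_le_six (hF : Fintype.card F = 2 ^ m) (hm : 4 ≤ m) :
    ∃ S : Finset F, GoodSet e S ∧ S.card ≤ 6 := by
  have hlt : (univ : Finset (F × F)).card < (Finset.powersetCard 3 (univ : Finset F)).card := by
    rw [Finset.card_powersetCard, Finset.card_univ, Finset.card_univ, Fintype.card_prod, hF]
    apply choose_gt
    calc 16 = 2 ^ 4 := by norm_num
      _ ≤ _ := Nat.pow_le_pow_right (by norm_num) hm
  obtain ⟨S, hS, T, hT, hne, heq⟩ := Finset.exists_ne_map_eq_of_card_lt_of_maps_to hlt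
    (f := fun S : Finset F => (∑ x ∈ S, x, ∑ x ∈ S, x ^ (1 + 2 ^ e))) (fun _ _ => by simp)
  simp only [Prod.mk.injEq] at heq
  rw [Finset.mem_powersetCard] at hS hT
  have h3 : (symmDiff S T).card = (S \ T).card + (T \ S).card := by
    rw [symmDiff_def, Finset.sup_eq_union, Finset.card_union_of_disjoint]
    exact disjoint_sdiff_sdiff
  have h1 := Finset.card_sdiff_add_card_inter S T
  have h2 := Finset.card_sdiff_add_card_inter T S
  rw [Finset.inter_comm] at h2
  refine ⟨symmDiff S T, ⟨?_, ?_, ?_, ?_⟩, by omega⟩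
  · rw [Finset.nonempty_iff_ne_empty]
    intro h
    exact hne (symmDiff_eq_bot.1 h)
  · rw [h3]
    exact ⟨(S \ T).card, by omega⟩
  · rw [sum_symmDiff_two S T (fun x => x), heq.1, add_self]
  · rw [sum_symmDiff_two, heq.2, add_self]

end Code

section Glue

variable {m e : ℕ}

lemma sum_fin_succ {M : Type*} [AddCommMonoid M] {n N : ℕ} (h : N = n + 1) (f : Fin N → M) :
    ∑ i, f i = ∑ i : Fin n, f (Fin.castLE (by omega) i) + f ⟨n, by omega⟩ := by
  subst h
  rw [Fin.sum_univ_castSucc]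
  rfl

noncomputable instance : Fintype (GaloisField 2 m) := Fintype.ofFinite _

noncomputable instance : DecidableEq (GaloisField 2 m) := Classical.decEq _

lemma card_GF (hm : 4 ≤ m) : Fintype.card (GaloisField 2 m) = 2 ^ m := by
  rw [← Nat.card_eq_fintype_card]
  exact GaloisField.card 2 m (by omega)

/-- The evaluation points. -/
noncomputable def pts (m : ℕ) (α : GaloisField 2 m) (i : Fin (2 ^ m)) : GaloisField 2 m :=
  if i.1 < 2 ^ m - 1 then α ^ i.1 else 0

lemma pts_bij (hm : 4 ≤ m) (α : GaloisField 2 m) (hα : orderOf α = 2 ^ m - 1) :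
    Function.Bijective (pts m α) := by
  have h16 : 2 ^ 4 ≤ 2 ^ m := Nat.pow_le_pow_right (by norm_num) hm
  have hα0 : α ≠ 0 := by
    rintro rfl
    rw [orderOf_zero] at hα
    omega
  rw [Fintype.bijective_iff_injective_and_card]
  refine ⟨?_, by rw [card_GF hm, Fintype.card_fin]⟩
  intro i j hij
  have hi := i.2
  have hj := j.2
  simp only [pts] at hij
  split_ifs at hij with h1 h2 h2
  · exact Fin.ext (pow_injOn_Iio_orderOf (by simpa [hα] using h1) (by simpa [hα] using h2) hij)
  · exact absurd hij (pow_ne_zero _ hα0)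
  · exact absurd hij.symm (pow_ne_zero _ hα0)
  · exact Fin.ext (by omega)

lemma aeval_codePoly {n : ℕ} (c : Fin n → ZMod 2) (β : GaloisField 2 m) :
    Polynomial.aeval β (codePoly c) = ∑ i, c i • β ^ (i : ℕ) := by
  simp [codePoly, Algebra.smul_def]

lemma minpoly_ne (hm : 4 ≤ m) (he1 : 1 ≤ e) (he : 2 * e < m) (α : GaloisField 2 m)
    (hα : orderOf α = 2 ^ m - 1) :
    minpoly (ZMod 2) α ≠ minpoly (ZMod 2) (α ^ (1 + 2 ^ e)) := by
  classical
  intro h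
  have h' : IsConjRoot (ZMod 2) (α ^ (1 + 2 ^ e)) α := h.symm
  rw [isConjRoot_iff_exists_algEquiv] at h'
  obtain ⟨σ, hσ⟩ := h'
  have hall : ∀ x, σ x = x ^ (1 + 2 ^ e) := by
    intro x
    obtain ⟨i, rfl⟩ := (pts_bij hm α hα).2 x
    rw [pts]
    split_ifs
    · rw [map_pow, hσ, ← pow_mul, ← pow_mul, mul_comm]
    · simp
  have hfix : ∀ x : GaloisField 2 m, x ^ 2 ^ e = x := by
    intro x
    have h1 := map_add σ x 1
    rw [hall, hall, hall, pow_add, pow_add, add_pow_two_pow] at h1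
    simp only [pow_one, one_pow] at h1
    rw [← add_eq_zero_iff_eq']
    linear_combination h1
  have hc := card_fix (card_GF hm) e
  rw [Finset.filter_true_of_mem (fun x _ => hfix x), Finset.card_univ, card_GF hm] at hc
  have h2 := Nat.pow_right_injective (le_refl 2) hc
  have h3 : Nat.gcd m e ≤ e := Nat.gcd_le_right m (by omega)
  omega

lemma gE_dvd (hm : 4 ≤ m) (he1 : 1 ≤ e) (he : 2 * e < m) (α : GaloisField 2 m)
    (hα : orderOf α = 2 ^ m - 1) (p : Polynomial (ZMod 2)) :
    gE m e α ∣ p ↔ Polynomial.aeval α p = 0 ∧ Polynomial.aeval (α ^ (1 + 2 ^ e)) p = 0 := by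
  have i1 : IsIntegral (ZMod 2) α := Algebra.IsIntegral.isIntegral _
  have i2 : IsIntegral (ZMod 2) (α ^ (1 + 2 ^ e)) := Algebra.IsIntegral.isIntegral _
  rw [← minpoly.dvd_iff, ← minpoly.dvd_iff, gE]
  constructor
  · intro h
    exact ⟨dvd_of_mul_right_dvd h, dvd_of_mul_left_dvd h⟩
  · rintro ⟨h1, h2⟩
    refine IsCoprime.mul_dvd ?_ h1 h2
    rw [(minpoly.irreducible i1).coprime_iff_not_dvd]
    intro hd
    have := (minpoly.irreducible i1).associated_of_dvd (minpoly.irreducible i2) hd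
    exact minpoly_ne hm he1 he α hα
      (Polynomial.eq_of_monic_of_associated (minpoly.monic i1) (minpoly.monic i2) this)

lemma mem_CEbar (hm : 4 ≤ m) (he1 : 1 ≤ e) (he : 2 * e < m) (α : GaloisField 2 m)
    (hα : orderOf α = 2 ^ m - 1) (c : Fin (2 ^ m) → ZMod 2) :
    c ∈ CEbar m e α ↔ Chk e (Equiv.ofBijective _ (pts_bij hm α hα)) c := by
  have hN : 2 ^ m = (2 ^ m - 1) + 1 := (Nat.sub_add_cancel Nat.one_le_two_pow).symm
  have hs : ∀ k : ℕ, k ≠ 0 → ∑ i, c i • pts m α i ^ k =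
      ∑ i : Fin (2 ^ m - 1), c (Fin.castLE (Nat.sub_le _ _) i) • (α ^ k) ^ (i : ℕ) := by
    intro k hk
    rw [sum_fin_succ hN]
    have h1 : ∀ i : Fin (2 ^ m - 1), pts m α (Fin.castLE (Nat.sub_le _ _) i) = α ^ (i : ℕ) := by
      intro i
      simp [pts]
    simp only [h1]
    simp only [pts, lt_self_iff_false, if_false, zero_pow hk, smul_zero, add_zero]
    refine Finset.sum_congr rfl fun i _ => ?_
    rw [← pow_mul, ← pow_mul, mul_comm]
  have h1 := hs 1 one_ne_zero
  have h2 := hs (1 + 2 ^ e) (by positivity)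
  simp only [pow_one] at h1
  change (gE m e α ∣ codePoly _ ∧ _) ↔ _
  rw [gE_dvd hm he1 he α hα, aeval_codePoly, aeval_codePoly, ← h1, ← h2, Chk, and_assoc]
  rfl

lemma CEbarSub_eq (hm : 4 ≤ m) (he1 : 1 ≤ e) (he : 2 * e < m) (α : GaloisField 2 m)
    (hα : orderOf α = 2 ^ m - 1) :
    CEbarSub m e α = (dotB (2 ^ m)).orthogonal
      (LinearMap.range (TT e (Equiv.ofBijective _ (pts_bij hm α hα)))) := by
  ext c
  rw [← chk_iff, ← mem_CEbar hm he1 he α hα]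
  rfl

lemma dual_eq (hm : 4 ≤ m) (he1 : 1 ≤ e) (he : 2 * e < m) (α : GaloisField 2 m)
    (hα : orderOf α = 2 ^ m - 1) :
    dualCode (CEbar m e α) =
      LinearMap.range (TT e (Equiv.ofBijective _ (pts_bij hm α hα))) := by
  rw [← LinearMap.BilinForm.orthogonal_orthogonal dotB_nondeg dotB_refl
    (LinearMap.range (TT e (Equiv.ofBijective _ (pts_bij hm α hα)))), ← CEbarSub_eq hm he1 he α hα]
  ext y
  rw [LinearMap.BilinForm.mem_orthogonal_iff]
  constructor
  · intro h c hc
    have := h c hc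
    change dotB _ c y = 0
    rw [dotB_symm]; exact this
  · intro h c hc
    have : dotB _ c y = 0 := h c hc
    rw [dotB_symm] at this; exact this

end Glue

/-- Let `m ≥ 4`, `1 ≤ e < m/2` with `m/gcd(m,e)` even, and
`ℓ = 2·gcd(m,e)`. Then `C̄_E^⊥` has dimension `2m + 1`, minimum nonzero weight
`2^{m−1} − 2^{(m+ℓ−2)/2}`, and the stated weight distribution (counts divided by
`2^{ℓ/2} + 1` are stated multiplied through), with no codewords of other weights;
moreover `C̄_E` has dimension `2^m − 1 − 2m` and minimum nonzero weight `4` if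
`gcd(e,m) > 1` and `6` if `gcd(e,m) = 1`. -/
theorem dual_code_parameters_case_c
    (m e l : ℕ) (hm : 4 ≤ m) (he1 : 1 ≤ e) (he : 2 * e < m)
    (heven : Even (m / Nat.gcd m e)) (hl : l = 2 * Nat.gcd m e)
    (α : GaloisField 2 m) (hα : orderOf α = 2 ^ m - 1) :
    Module.finrank (ZMod 2) ↥(dualCode (CEbar m e α)) = 2 * m + 1 ∧
    IsLeast {i | ∃ y ∈ dualCode (CEbar m e α), y ≠ 0 ∧ hammingNorm y = i}
      (2 ^ (m - 1) - 2 ^ ((m + l - 2) / 2)) ∧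
    {y : Fin (2 ^ m) → ZMod 2 |
      y ∈ dualCode (CEbar m e α) ∧ hammingNorm y = 0}.ncard = 1 ∧
    (2 ^ (l / 2) + 1) * {y : Fin (2 ^ m) → ZMod 2 | y ∈ dualCode (CEbar m e α) ∧
      hammingNorm y = 2 ^ (m - 1) - 2 ^ ((m + l - 2) / 2)}.ncard =
        2 ^ (m - l) * (2 ^ m - 1) ∧
    (2 ^ (l / 2) + 1) * {y : Fin (2 ^ m) → ZMod 2 | y ∈ dualCode (CEbar m e α) ∧
      hammingNorm y = 2 ^ (m - 1) - 2 ^ ((m - 2) / 2)}.ncard =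
        2 ^ ((2 * m + l) / 2) * (2 ^ m - 1) ∧
    {y : Fin (2 ^ m) → ZMod 2 | y ∈ dualCode (CEbar m e α) ∧
      hammingNorm y = 2 ^ (m - 1)}.ncard =
        2 * ((2 ^ (l / 2) - 1) * 2 ^ (m - l) + 1) * (2 ^ m - 1) ∧
    (2 ^ (l / 2) + 1) * {y : Fin (2 ^ m) → ZMod 2 | y ∈ dualCode (CEbar m e α) ∧
      hammingNorm y = 2 ^ (m - 1) + 2 ^ ((m - 2) / 2)}.ncard =
        2 ^ ((2 * m + l) / 2) * (2 ^ m - 1) ∧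
    (2 ^ (l / 2) + 1) * {y : Fin (2 ^ m) → ZMod 2 | y ∈ dualCode (CEbar m e α) ∧
      hammingNorm y = 2 ^ (m - 1) + 2 ^ ((m + l - 2) / 2)}.ncard =
        2 ^ (m - l) * (2 ^ m - 1) ∧
    {y : Fin (2 ^ m) → ZMod 2 | y ∈ dualCode (CEbar m e α) ∧
      hammingNorm y = 2 ^ m}.ncard = 1 ∧
    (∀ y ∈ dualCode (CEbar m e α), hammingNorm y ∈
      ({0, 2 ^ (m - 1) - 2 ^ ((m + l - 2) / 2), 2 ^ (m - 1) - 2 ^ ((m - 2) / 2),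
        2 ^ (m - 1), 2 ^ (m - 1) + 2 ^ ((m - 2) / 2),
        2 ^ (m - 1) + 2 ^ ((m + l - 2) / 2), 2 ^ m} : Set ℕ)) ∧
    Module.finrank (ZMod 2) ↥(CEbarSub m e α) = 2 ^ m - 1 - 2 * m ∧
    (1 < Nat.gcd e m →
      IsLeast {i | ∃ c ∈ CEbar m e α, c ≠ 0 ∧ hammingNorm c = i} 4) ∧
    (Nat.gcd e m = 1 →
      IsLeast {i | ∃ c ∈ CEbar m e α, c ≠ 0 ∧ hammingNorm c = i} 6) := by
    classical
  obtain ⟨d, hd⟩ : ∃ d, Nat.gcd m e = d := ⟨_, rfl⟩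
  have hd1 : 1 ≤ d := hd ▸ Nat.gcd_pos_of_pos_right m he1
  have hde : d ≤ e := hd ▸ Nat.gcd_le_right m he1
  have hdm : 2 * d < m := by omega
  have h2d : Nat.gcd m (2 * e) = 2 * d := by
    rw [hd] at heven
    obtain ⟨k, hk⟩ := heven
    have hdm' : d ∣ m := hd ▸ Nat.gcd_dvd_left m e
    have hde' : d ∣ e := hd ▸ Nat.gcd_dvd_right m e
    obtain ⟨e', he'⟩ := hde'
    have hmk : m = d * (2 * k) := by
      rw [two_mul, ← hk, Nat.mul_div_cancel' hdm']
    have h1 : d * Nat.gcd (2 * k) e' = d * 1 := by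
      rw [← Nat.gcd_mul_left, ← hmk, ← he', hd, mul_one]
    have h2 : Nat.Coprime (2 * k) e' := Nat.eq_of_mul_eq_mul_left hd1 h1
    have h3 : Nat.Coprime k e' := Nat.Coprime.coprime_mul_left h2
    rw [hmk, he', show d * (2 * k) = (2 * d) * k by ring,
      show 2 * (d * e') = (2 * d) * e' by ring, Nat.gcd_mul_left, h3.gcd_eq_one, mul_one]
  obtain ⟨h, hmh⟩ : ∃ h, m = 2 * h := by
    have : 2 * d ∣ m := h2d ▸ Nat.gcd_dvd_left m (2 * e)
    exact dvd_trans (dvd_mul_right 2 d) this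
  rw [hd] at hl
  have hF := card_GF hm
  set P := Equiv.ofBijective _ (pts_bij hm α hα) with hP
  have hinj : Function.Injective (TT e P) := TT_inj P rfl hF (by omega) h2d hdm
  have hdual : dualCode (CEbar m e α) = LinearMap.range (TT e P) := dual_eq hm he1 he α hα
  have hfin : Module.finrank (ZMod 2) (LinearMap.range (TT e P)) = 2 * m + 1 := by
    rw [LinearMap.finrank_range_of_inj hinj, Module.finrank_prod, Module.finrank_prod,
      GaloisField.finrank 2 (by omega), Module.finrank_self]
    ring
  have e1 : (m + l - 2) / 2 = h + d - 1 := by omega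
  have e2 : (m - 2) / 2 = h - 1 := by omega
  have e3 : l / 2 = d := by omega
  have e4 : (2 * m + l) / 2 = m + d := by omega
  have p0 : 2 ^ m = 2 * 2 ^ (m - 1) := by
    rw [← pow_succ']; congr 1; omega
  have p1 : 2 ^ (h + d) = 2 * 2 ^ (h + d - 1) := by
    rw [← pow_succ']; congr 1; omega
  have p2 : 2 ^ h = 2 * 2 ^ (h - 1) := by
    rw [← pow_succ']; congr 1; omega
  have lt1 : 2 ^ (h + d - 1) < 2 ^ (m - 1) := Nat.pow_lt_pow_right (by norm_num) (by omega)
  have lt2 : 2 ^ (h - 1) < 2 ^ (h + d - 1) := Nat.pow_lt_pow_right (by norm_num) (by omega)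
  have lt3 : 0 < 2 ^ (h - 1) := by positivity
  have z0 : (2 : ℤ) ^ m = 2 * 2 ^ (m - 1) := by exact_mod_cast p0
  have z1 : (2 : ℤ) ^ (h + d) = 2 * 2 ^ (h + d - 1) := by exact_mod_cast p1
  have z2 : (2 : ℤ) ^ h = 2 * 2 ^ (h - 1) := by exact_mod_cast p2
  have q1 : ((2 : ℤ) ^ (h + d)) ^ 2 = 2 ^ (m + 2 * d) := by
    rw [← pow_mul]; congr 1; omega
  have q2 : ((2 : ℤ) ^ h) ^ 2 = 2 ^ m := by
    rw [← pow_mul]; congr 1; omega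
  have q3 : ((2 : ℤ) ^ m) ^ 2 = 2 ^ (2 * m) := by
    rw [← pow_mul]; congr 1; omega
  have cntTop : ∀ s : ℤ, s ^ 2 = 2 ^ (2 * m) → s ≠ 0 →
      (univ.filter fun t : GaloisField 2 m × GaloisField 2 m × ZMod 2 =>
        sg t.2.2 * SS e t.1 t.2.1 = s).card = 1 := by
    intro s hs hs0
    rw [card_SS_ne s hs0, hs]
    simp only [A3_eq hF (by omega : 1 ≤ m) h2d hdm]
    rw [Finset.card_eq_one]
    refine ⟨(0, 0), ?_⟩
    ext p
    simp [Prod.ext_iff]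
  rw [hdual, e1, e2, e3, e4]
  have hl' : m - l = m - 2 * d := by omega
  rw [hl']
  have c1 : (2 ^ d + 1) * {y : Fin (2 ^ m) → ZMod 2 | y ∈ LinearMap.range (TT e P) ∧
      hammingNorm y = 2 ^ (m - 1) - 2 ^ (h + d - 1)}.ncard = 2 ^ (m - 2 * d) * (2 ^ m - 1) := by
    rw [count_w P hinj _ (2 ^ (h + d)) (by push_cast [lt1.le]; linarith),
      card_SS_ne _ (by positivity), q1, A1_eq hF hd hd1 h2d hdm]
  have call : ∀ y ∈ LinearMap.range (TT e P), hammingNorm y ∈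
      ({0, 2 ^ (m - 1) - 2 ^ (h + d - 1), 2 ^ (m - 1) - 2 ^ (h - 1),
        2 ^ (m - 1), 2 ^ (m - 1) + 2 ^ (h - 1),
        2 ^ (m - 1) + 2 ^ (h + d - 1), 2 ^ m} : Set ℕ) := by
    rintro _ ⟨⟨a, b, c⟩, rfl⟩
    have hw := TT_weight e P a b c
    have hsq : (sg c * SS e a b) ^ 2 = SS e a b ^ 2 := by rw [mul_pow, sg_sq, one_mul]
    simp only [Set.mem_insert_iff, Set.mem_singleton_iff]
    generalize hammingNorm (TT e P (a, b, c)) = w at *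
    push_cast at hw
    have hcases := SS_sq_cases hF h2d a b
    rw [← A3_eq hF (by omega : 1 ≤ m) h2d hdm, ← hsq, hw, ← q1, ← q2, ← q3] at hcases
    have l1 : ((2 ^ (m - 1) : ℕ) : ℤ) = 2 ^ (m - 1) := by push_cast; rfl
    have l2 : ((2 ^ (h - 1) : ℕ) : ℤ) = 2 ^ (h - 1) := by push_cast; rfl
    have l3 : ((2 ^ (h + d - 1) : ℕ) : ℤ) = 2 ^ (h + d - 1) := by push_cast; rfl
    rcases hcases with hc | hc | hc | hc
    · have := pow_eq_zero_iff (two_ne_zero) |>.1 hc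
      omega
    all_goals
      rcases sq_eq_sq_iff_eq_or_eq_neg.1 hc with hc | hc
      all_goals omega
  have hker : ∀ y : Fin (2 ^ m) → ZMod 2, hammingNorm y = 0 → y = 0 :=
    fun y hy => hammingNorm_eq_zero.1 hy
  refine ⟨hfin, ⟨?_, ?_⟩, ?_, c1, ?_, ?_, ?_, ?_, ?_, call, ?_, ?_, ?_⟩
  · have hpos : 0 < 2 ^ (m - 2 * d) * (2 ^ m - 1) := by
      have : 0 < 2 ^ m - 1 := by omega
      positivity
    rw [← c1] at hpos
    have hpos2 := Nat.pos_of_mul_pos_left hpos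
    obtain ⟨y, hy⟩ := Set.nonempty_of_ncard_ne_zero hpos2.ne'
    refine ⟨y, hy.1, ?_, hy.2⟩
    rintro rfl
    have := hy.2
    rw [hammingNorm_zero] at this
    omega
  · rintro _ ⟨y, hy, hy0, rfl⟩
    have := call y hy
    have hne : hammingNorm y ≠ 0 := fun h => hy0 (hker y h)
    simp only [Set.mem_insert_iff, Set.mem_singleton_iff] at this
    omega
  · rw [count_w P hinj _ (2 ^ m) (by push_cast; ring)]
    exact cntTop _ q3 (by positivity)
  · rw [count_w P hinj _ (2 ^ h) (by push_cast [(lt2.trans lt1).le]; linarith),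
      card_SS_ne _ (by positivity), q2, A2_eq hF hd hd1 h2d hdm]
  · rw [count_w P hinj _ 0 (by push_cast; linarith), card_SS_zero, A0_eq hF hd hd1 h2d hdm,
      mul_assoc]
  · rw [count_w P hinj _ (-2 ^ h) (by push_cast; linarith),
      card_SS_ne _ (neg_ne_zero.2 (by positivity)), neg_sq, q2, A2_eq hF hd hd1 h2d hdm]
  · rw [count_w P hinj _ (-2 ^ (h + d)) (by push_cast; linarith),
      card_SS_ne _ (neg_ne_zero.2 (by positivity)), neg_sq, q1, A1_eq hF hd hd1 h2d hdm]
  · rw [count_w P hinj _ (-2 ^ m) (by push_cast; ring)]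
    exact cntTop _ (by rw [neg_sq, q3]) (neg_ne_zero.2 (by positivity))
  · rw [CEbarSub_eq hm he1 he α hα, LinearMap.BilinForm.finrank_orthogonal dotB_nondeg, hfin,
      Module.finrank_fin_fun]
    omega
  · intro hg
    rw [Nat.gcd_comm] at hg
    constructor
    · obtain ⟨S, hS, hc⟩ := exists_four hF hg
      obtain ⟨c, h1, h2, h3⟩ := chk_of_good P S hS
      exact ⟨c, (mem_CEbar hm he1 he α hα c).2 h1, h2, h3.trans hc⟩
    · rintro _ ⟨c, hc, hc0, rfl⟩
      obtain ⟨S, hS, hSc⟩ := good_of_chk P c ((mem_CEbar hm he1 he α hα c).1 hc) hc0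
      rw [← hSc]
      exact good_ge_four S hS
  · intro hg
    rw [Nat.gcd_comm] at hg
    constructor
    · obtain ⟨S, hS, hc⟩ := exists_le_six (e := e) hF hm
      have hc6 := good_ge_six hF hg S hS
      obtain ⟨c, h1, h2, h3⟩ := chk_of_good P S hS
      exact ⟨c, (mem_CEbar hm he1 he α hα c).2 h1, h2, by omega⟩
    · rintro _ ⟨c, hc, hc0, rfl⟩
      obtain ⟨S, hS, hSc⟩ := good_of_chk P c ((mem_CEbar hm he1 he α hα c).1 hc) hc0
      rw [← hSc]
      exact good_ge_six hF hg S hS
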